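/- Let φ : ℝ³ → ℝ be smooth, harmonic (∂²φ/∂x² + ∂²φ/∂y² + ∂²φ/∂z² = 0 everywhere), 2π-periodic in y and in z, and suppose ∫₀^{2π} φ(x,y,z) dz = 0 for all (x,y) ∈ ℝ². Then there exists a smooth harmonic function H : ℝ³ → ℝ, 2π-periodic in y and in z, such that ∂H/∂z = φ everywhere and ∫₀^{2π} H(x,y,z) dz = 0 for all (x,y). -/

import Mathlib

noncomputable section

/-- Partial derivative with respect to the first coordinate `x` of `ℝ × ℝ × ℝ`. -/
def pdx (f : ℝ × ℝ × ℝ → ℝ) (p : ℝ × ℝ × ℝ) : ℝ := fderiv ℝ f p (1, 0, 0)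

/-- Partial derivative with respect to the second coordinate `y` of `ℝ × ℝ × ℝ`. -/
def pdy (f : ℝ × ℝ × ℝ → ℝ) (p : ℝ × ℝ × ℝ) : ℝ := fderiv ℝ f p (0, 1, 0)

/-- Partial derivative with respect to the third coordinate `z` of `ℝ × ℝ × ℝ`. -/
def pdz (f : ℝ × ℝ × ℝ → ℝ) (p : ℝ × ℝ × ℝ) : ℝ := fderiv ℝ f p (0, 0, 1)

/-!
With `e` the `z`-direction and `T = 2π`, put `H p = ∫ t in 0..T, (t / T) • φ (p + t • e)`. This is a
convolution, so it commutes with every partial derivative, with translations and with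
averaging along `e`: hence it inherits harmonicity, periodicity and vanishing mean from `φ`.
Integrating by parts, `∂H/∂z` is `φ (p + T • e) = φ p` minus the mean of `φ` along `e`.
-/

universe u

open Filter intervalIntegral Topology

lemma integral_comp_add_left_of_periodic {F : Type*} [NormedAddCommGroup F] [NormedSpace ℝ F]
    {g : ℝ → F} {T : ℝ} (hg : Function.Periodic g T) (a : ℝ) :
    ∫ t in (0 : ℝ)..T, g (a + t) = ∫ t in (0 : ℝ)..T, g t := by
  simpa only [integral_comp_add_left, add_zero, zero_add] using hg.intervalIntegral_add_eq a 0

/-- The integral of `f` along the segment from `p + a • e` to `p + b • e` against the weight `k`,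
that is, the convolution of `f` with a weight carried by the line through `e`. -/
def weightedSegmentIntegral {E F : Type*} [AddCommGroup E] [Module ℝ E] [NormedAddCommGroup F]
    [NormedSpace ℝ F] (k : ℝ → ℝ) (a b : ℝ) (e : E) (f : E → F) (p : E) : F :=
  ∫ t in a..b, k t • f (p + t • e)

namespace weightedSegmentIntegral

variable {E F : Type*} [NormedAddCommGroup E] [NormedSpace ℝ E]
  [NormedAddCommGroup F] [NormedSpace ℝ F]
  {k : ℝ → ℝ} {a b : ℝ} {e : E} {f : E → F}

lemma intervalIntegrable (hk : Continuous k) (hf : Continuous f) (p : E) :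
    IntervalIntegrable (fun t ↦ k t • f (p + t • e)) MeasureTheory.volume a b :=
  Continuous.intervalIntegrable (by fun_prop) a b

protected lemma continuous (hk : Continuous k) (hf : Continuous f) :
    Continuous (weightedSegmentIntegral k a b e f) :=
  continuous_parametric_intervalIntegral_of_continuous'
    (f := fun p t ↦ k t • f (p + t • e)) (by fun_prop) a b

protected lemma periodic {w : E} (hf : Function.Periodic f w) :
    Function.Periodic (weightedSegmentIntegral k a b e f) w := fun p ↦ by
  simp only [weightedSegmentIntegral, add_right_comm p w, hf _]

lemma sum_apply {ι : Type*} {s : Finset ι} {g : ι → E → F} (hk : Continuous k)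
    (hg : ∀ i ∈ s, Continuous (g i)) (p : E) :
    weightedSegmentIntegral k a b e (fun q ↦ ∑ i ∈ s, g i q) p =
      ∑ i ∈ s, weightedSegmentIntegral k a b e (g i) p := by
  simp only [weightedSegmentIntegral, Finset.smul_sum]
  exact integral_finsetSum fun i hi ↦ intervalIntegrable hk (hg i hi) p

lemma integral_segment_comm (hk : Continuous k) (hf : Continuous f) (c d : ℝ) (u p : E) :
    ∫ s in c..d, weightedSegmentIntegral k a b e f (p + s • u) =
      weightedSegmentIntegral k a b e (fun q ↦ ∫ s in c..d, f (q + s • u)) p := by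
  have hcont : Continuous (fun x : ℝ × ℝ ↦ k x.2 • f (p + x.1 • u + x.2 • e)) := by fun_prop
  have hint := hcont.continuousOn.integrableOn_compact (μ := MeasureTheory.volume)
    ((isCompact_uIcc (a := c) (b := d)).prod (isCompact_uIcc (a := a) (b := b)))
  simp only [weightedSegmentIntegral]
  rw [MeasureTheory.intervalIntegral_intervalIntegral_swap
    (F := fun s t ↦ k t • f (p + s • u + t • e))
    (hint.mono_set (Set.prod_mono Set.uIoc_subset_uIcc Set.uIoc_subset_uIcc))]
  simp only [integral_smul, add_right_comm p]

protected lemma hasFDerivAt (hk : Continuous k) (hf : ContDiff ℝ 1 f) (p : E) :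
    HasFDerivAt (weightedSegmentIntegral k a b e f)
      (weightedSegmentIntegral k a b e (fderiv ℝ f) p) p := by
  have : Continuous (fderiv ℝ f) := hf.continuous_fderiv one_ne_zero
  have hcont : Continuous fun x : E × ℝ ↦ k x.2 • fderiv ℝ f (x.1 + x.2 • e) := by fun_prop
  obtain ⟨C, hC⟩ : ∃ C, ∀ t ∈ Set.uIcc a b, ‖k t • fderiv ℝ f (p + t • e)‖ ≤ C :=
    isCompact_uIcc.exists_bound_of_continuousOn (by fun_prop)
  have hbound : ∀ᶠ q in 𝓝 p, ∀ t ∈ Set.uIcc a b, ‖k t • fderiv ℝ f (q + t • e)‖ < C + 1 :=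
    isCompact_uIcc.eventually_forall_of_forall_eventually fun t ht ↦
      hcont.norm.continuousAt.eventually_lt_const ((hC t ht).trans_lt (lt_add_one C))
  have hf₀ : Continuous f := hf.continuous
  refine hasFDerivAt_integral_of_dominated_of_fderiv_le (bound := fun _ ↦ C + 1)
    (F' := fun q t ↦ k t • fderiv ℝ f (q + t • e)) hbound
    (.of_forall fun q ↦ Continuous.aestronglyMeasurable (by fun_prop))
    (intervalIntegrable hk hf₀ p) (Continuous.aestronglyMeasurable (by fun_prop))
    (.of_forall fun t ht q hq ↦ (hq t (Set.uIoc_subset_uIcc ht)).le)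
    intervalIntegrable_const (.of_forall fun t _ q _ ↦ ?_)
  have hderiv := (hf.differentiable one_ne_zero (q + t • e)).hasFDerivAt
  exact ((hasFDerivAt_comp_add_right (t • e)).2 hderiv).const_smul (k t)

lemma fderiv_apply (hk : Continuous k) (hf : ContDiff ℝ 1 f) (p v : E) :
    fderiv ℝ (weightedSegmentIntegral k a b e f) p v =
      weightedSegmentIntegral k a b e (fun q ↦ fderiv ℝ f q v) p := by
  rw [(weightedSegmentIntegral.hasFDerivAt hk hf p).fderiv]
  exact ContinuousLinearMap.intervalIntegral_apply
    (intervalIntegrable hk (hf.continuous_fderiv one_ne_zero) p) v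

-- `E` and `F` share a universe because the induction replaces `F` by `E →L[ℝ] F`.
lemma contDiff_nat {E F : Type u} [NormedAddCommGroup E] [NormedSpace ℝ E]
    [NormedAddCommGroup F] [NormedSpace ℝ F] {e : E} {f : E → F} {n : ℕ} (hk : Continuous k)
    (hf : ContDiff ℝ n f) : ContDiff ℝ n (weightedSegmentIntegral k a b e f) := by
  induction n generalizing F with
  | zero => exact contDiff_zero.2 (weightedSegmentIntegral.continuous hk hf.continuous)
  | succ n ih =>
    have hf₁ : ContDiff ℝ 1 f := hf.of_le (by simp)
    have hderiv := weightedSegmentIntegral.hasFDerivAt (a := a) (b := b) (e := e) hk hf₁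
    push_cast at hf ⊢
    refine contDiff_succ_iff_fderiv.2 ⟨fun p ↦ (hderiv p).differentiableAt, by simp, ?_⟩
    rw [funext fun p ↦ (hderiv p).fderiv]
    exact ih (contDiff_succ_iff_fderiv.1 hf).2.2

protected lemma contDiff {E F : Type u} [NormedAddCommGroup E] [NormedSpace ℝ E]
    [NormedAddCommGroup F] [NormedSpace ℝ F] {e : E} {f : E → F} {n : ℕ∞} (hk : Continuous k)
    (hf : ContDiff ℝ n f) : ContDiff ℝ n (weightedSegmentIntegral k a b e f) :=
  contDiff_iff_forall_nat_le.2 fun _ hm ↦ contDiff_nat hk (hf.of_le (mod_cast hm))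

end weightedSegmentIntegral

/-- The sum of the second derivatives of `f` in the directions `v i`. It is the Laplacian when `v`
is an orthonormal basis, but needs no inner product on `E`, and `ℝ × ℝ × ℝ` carries none. -/
def laplacianAlong {ι E F : Type*} [Fintype ι] [NormedAddCommGroup E] [NormedSpace ℝ E]
    [NormedAddCommGroup F] [NormedSpace ℝ F] (v : ι → E) (f : E → F) (p : E) : F :=
  ∑ i, fderiv ℝ (fun q ↦ fderiv ℝ f q (v i)) p (v i)

section Derivatives

variable {E F : Type*} [NormedAddCommGroup E] [NormedSpace ℝ E]
  [NormedAddCommGroup F] [NormedSpace ℝ F] {e : E} {f : E → F}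

lemma laplacianAlong_weightedSegmentIntegral {ι : Type*} [Fintype ι] {k : ℝ → ℝ} {a b : ℝ}
    (v : ι → E) (hk : Continuous k) (hf : ContDiff ℝ 2 f) (p : E) :
    laplacianAlong v (weightedSegmentIntegral k a b e f) p =
      weightedSegmentIntegral k a b e (laplacianAlong v f) p := by
  have hf₁ (w : E) : ContDiff ℝ 1 (fun q ↦ fderiv ℝ f q w) :=
    (hf.fderiv_right (m := 1) le_rfl).clm_apply contDiff_const
  have hf₂ (w : E) : Continuous (fun q ↦ fderiv ℝ (fun q ↦ fderiv ℝ f q w) q w) :=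
    ((hf₁ w).continuous_fderiv one_ne_zero).clm_apply continuous_const
  have hcomm (w : E) : (fun q ↦ fderiv ℝ (weightedSegmentIntegral k a b e f) q w) =
      weightedSegmentIntegral k a b e (fun q ↦ fderiv ℝ f q w) :=
    funext fun q ↦ weightedSegmentIntegral.fderiv_apply hk (hf.of_le one_le_two) q w
  unfold laplacianAlong
  simp only [hcomm, weightedSegmentIntegral.fderiv_apply hk (hf₁ _),
    weightedSegmentIntegral.sum_apply hk fun i _ ↦ hf₂ (v i)]

lemma fderiv_weightedSegmentIntegral_sawtooth [CompleteSpace F] {T : ℝ} (hT : T ≠ 0)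
    (hf : ContDiff ℝ 1 f) (p : E) :
    fderiv ℝ (weightedSegmentIntegral (fun t ↦ t / T) 0 T e f) p e =
      f (p + T • e) - (1 / T) • ∫ t in (0 : ℝ)..T, f (p + t • e) := by
  have hf' : Continuous fun t : ℝ ↦ fderiv ℝ f (p + t • e) e :=
    ((hf.continuous_fderiv one_ne_zero).comp (by fun_prop)).clm_apply continuous_const
  have hsegment (t : ℝ) : HasDerivAt (fun t ↦ f (p + t • e)) (fderiv ℝ f (p + t • e) e) t := by
    have hline : HasDerivAt (fun t : ℝ ↦ p + t • e) e t := by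
      simpa using ((hasDerivAt_id t).smul_const e).const_add p
    exact (hf.differentiable one_ne_zero _).hasFDerivAt.comp_hasDerivAt t hline
  rw [weightedSegmentIntegral.fderiv_apply (by fun_prop) hf, weightedSegmentIntegral,
    integral_smul_deriv_eq_deriv_smul (fun t _ ↦ (hasDerivAt_id' t).div_const T)
      (fun t _ ↦ hsegment t) intervalIntegrable_const (hf'.intervalIntegrable 0 T)]
  simp [hT]

end Derivatives

theorem statement2_general {E F : Type u} [NormedAddCommGroup E] [NormedSpace ℝ E]
    [NormedAddCommGroup F] [NormedSpace ℝ F] [CompleteSpace F]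
    {ι : Type*} [Fintype ι] (v : ι → E) (e : E) {T : ℝ} (hT : T ≠ 0)
    (φ : E → F) (hφ : ContDiff ℝ (⊤ : ℕ∞) φ) (hharm : ∀ p, laplacianAlong v φ p = 0)
    (hper : Function.Periodic φ (T • e)) (havg : ∀ p, ∫ t in (0 : ℝ)..T, φ (p + t • e) = 0) :
    ∃ H : E → F, ContDiff ℝ (⊤ : ℕ∞) H ∧ (∀ p, laplacianAlong v H p = 0) ∧
      (∀ w, Function.Periodic φ w → Function.Periodic H w) ∧ (∀ p, fderiv ℝ H p e = φ p) ∧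
      ∀ p, ∫ t in (0 : ℝ)..T, H (p + t • e) = 0 := by
  have hk : Continuous fun t : ℝ ↦ t / T := by fun_prop
  refine ⟨weightedSegmentIntegral (fun t ↦ t / T) 0 T e φ, weightedSegmentIntegral.contDiff hk hφ,
    fun p ↦ ?_, fun w hw ↦ weightedSegmentIntegral.periodic hw,
    fun p ↦ ?_, fun p ↦ ?_⟩
  · rw [laplacianAlong_weightedSegmentIntegral v hk (contDiff_infty.1 hφ 2)]
    simp [weightedSegmentIntegral, hharm]
  · rw [fderiv_weightedSegmentIntegral_sawtooth hT (hφ.of_le (mod_cast le_top)), hper,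
      havg, smul_zero, sub_zero]
  · rw [weightedSegmentIntegral.integral_segment_comm hk hφ.continuous]
    simp [weightedSegmentIntegral, havg]

lemma laplacianAlong_coordinates (f : ℝ × ℝ × ℝ → ℝ) (p : ℝ × ℝ × ℝ) :
    laplacianAlong ![(1, 0, 0), (0, 1, 0), (0, 0, 1)] f p =
      pdx (pdx f) p + pdy (pdy f) p + pdz (pdz f) p :=
  Fin.sum_univ_three _

lemma periodic_y_iff {f : ℝ × ℝ × ℝ → ℝ} {T : ℝ} :
    Function.Periodic f (0, T, 0) ↔ ∀ x y z, f (x, y + T, z) = f (x, y, z) := by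
  simp [Function.Periodic]

lemma periodic_z_iff {f : ℝ × ℝ × ℝ → ℝ} {T : ℝ} :
    Function.Periodic f (T • (0, 0, 1)) ↔ ∀ x y z, f (x, y, z + T) = f (x, y, z) := by
  simp [Function.Periodic]

lemma integral_z_segment_eq_zero_iff {f : ℝ × ℝ × ℝ → ℝ} {T : ℝ}
    (hf : Function.Periodic f (T • (0, 0, 1))) :
    (∀ p : ℝ × ℝ × ℝ, ∫ t in (0 : ℝ)..T, f (p + t • (0, 0, 1)) = 0) ↔
      ∀ x y, ∫ z in (0 : ℝ)..T, f (x, y, z) = 0 := by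
  have hshift (x y z : ℝ) : ∫ t in (0 : ℝ)..T, f (x, y, z + t) = ∫ t in (0 : ℝ)..T, f (x, y, t) :=
    integral_comp_add_left_of_periodic (g := fun t ↦ f (x, y, t)) (periodic_z_iff.1 hf x y) z
  simp [hshift]

/-- Every smooth, doubly periodic harmonic potential `φ` with zero `z`-mean is the
`z`-derivative of a smooth, doubly periodic harmonic function `H` with zero `z`-mean
(the representation `φ⁽¹⁾ = ∂_z H⁽¹⁾`). -/
theorem statement2 (φ : ℝ × ℝ × ℝ → ℝ) (hφ : ContDiff ℝ (⊤ : ℕ∞) φ)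
    (hharm : ∀ p : ℝ × ℝ × ℝ, pdx (pdx φ) p + pdy (pdy φ) p + pdz (pdz φ) p = 0)
    (hpery : ∀ x y z : ℝ, φ (x, y + 2 * Real.pi, z) = φ (x, y, z))
    (hperz : ∀ x y z : ℝ, φ (x, y, z + 2 * Real.pi) = φ (x, y, z))
    (havg : ∀ x y : ℝ, (∫ z in (0:ℝ)..(2 * Real.pi), φ (x, y, z)) = 0) :
    ∃ H : ℝ × ℝ × ℝ → ℝ, ContDiff ℝ (⊤ : ℕ∞) H ∧
      (∀ p : ℝ × ℝ × ℝ, pdx (pdx H) p + pdy (pdy H) p + pdz (pdz H) p = 0) ∧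
      (∀ x y z : ℝ, H (x, y + 2 * Real.pi, z) = H (x, y, z)) ∧
      (∀ x y z : ℝ, H (x, y, z + 2 * Real.pi) = H (x, y, z)) ∧
      (∀ p : ℝ × ℝ × ℝ, pdz H p = φ p) ∧
      (∀ x y : ℝ, (∫ z in (0:ℝ)..(2 * Real.pi), H (x, y, z)) = 0) := by
  have hz := periodic_z_iff.2 hperz
  obtain ⟨H, hH, hHharm, hHper, hHz, hHavg⟩ := statement2_general _ _ Real.two_pi_pos.ne' φ hφ
    (fun p ↦ (laplacianAlong_coordinates φ p).trans (hharm p)) hz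
    ((integral_z_segment_eq_zero_iff hz).2 havg)
  exact ⟨H, hH, fun p ↦ (laplacianAlong_coordinates H p).symm.trans (hHharm p),
    periodic_y_iff.1 (hHper _ (periodic_y_iff.2 hpery)), periodic_z_iff.1 (hHper _ hz), hHz,
    (integral_z_segment_eq_zero_iff (hHper _ hz)).1 hHavg⟩
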